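/- arXiv:1502.03716 — 5 statements merged into one kernel-verified Lean document; each statement's English description precedes it below -/
import Mathlib

section
/- Lipschitz-type property of the block optimality measure: if x, y ∈ X are two vectors satisfying x_i = y_i for some i ∈ {1,…,N}, then |S_i(x) − S_i(y)| ≤ L_F · D_i · ‖A_i‖ · ‖A(x − y)‖. -/
open scoped RealInnerProductSpace BigOperators
noncomputable section

/-- The `i`-th block space `ℝ^{n_i}` (with the Euclidean norm). -/
abbrev Blk {N : ℕ} (nb : Fin N → ℕ) (i : Fin N) : Type := EuclideanSpace ℝ (Fin (nb i))

/-- The full space `ℝ^n`, `n = n_1 + ⋯ + n_N`, seen as the `ℓ²`-product of the blocks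
(this is isometric to `ℝ^n` with the Euclidean norm, respecting the block structure). -/
abbrev FullSpc {N : ℕ} (nb : Fin N → ℕ) : Type := PiLp 2 fun i => Blk nb i

/-- The inclusion of the `i`-th block into the full space, i.e. the linear map
`U_i` represented by the submatrix of the identity matrix corresponding to block `i`
(so that `x_i = U_iᵀ x` is simply `x i`). -/
def blkIncl {N : ℕ} (nb : Fin N → ℕ) (i : Fin N) : Blk nb i →L[ℝ] FullSpc nb :=
  LinearMap.toContinuousLinearMap
    (((WithLp.linearEquiv 2 ℝ (∀ i, Blk nb i)).symm.toLinearMap).comp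
      (LinearMap.single ℝ (fun i => Blk nb i) i))

/-- `∇ f (x) = Aᵀ ∇F(Ax)` for `f = F ∘ A`. -/
def gradFull {N m : ℕ} (nb : Fin N → ℕ) (A : FullSpc nb →L[ℝ] EuclideanSpace ℝ (Fin m))
    (gradF : EuclideanSpace ℝ (Fin m) → EuclideanSpace ℝ (Fin m)) (x : FullSpc nb) :
    FullSpc nb :=
  (ContinuousLinearMap.adjoint A) (gradF (A x))

/-- `∇_i f (x) = U_iᵀ ∇ f(x) = A_iᵀ ∇F(Ax)` where `A_i = A U_i`. -/
def gradBlk {N m : ℕ} (nb : Fin N → ℕ) (A : FullSpc nb →L[ℝ] EuclideanSpace ℝ (Fin m))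
    (gradF : EuclideanSpace ℝ (Fin m) → EuclideanSpace ℝ (Fin m)) (i : Fin N) (x : FullSpc nb) :
    Blk nb i :=
  (ContinuousLinearMap.adjoint (A.comp (blkIncl nb i))) (gradF (A x))

/-- **Lipschitz-type property of the block optimality measure**: if `x, y ∈ X` satisfy
`x_i = y_i` for some `i`, then `|S_i(x) − S_i(y)| ≤ L_F · D_i · ‖A_i‖ · ‖A(x − y)‖`. -/
theorem block_optimality_measure_lipschitz
    {N m : ℕ} (hN : 0 < N) (nb : Fin N → ℕ) (hnb : ∀ i, 0 < nb i)
    (A : FullSpc nb →L[ℝ] EuclideanSpace ℝ (Fin m))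
    (Xi : ∀ i, Set (Blk nb i))
    (hXcpt : ∀ i, IsCompact (Xi i)) (hXconv : ∀ i, Convex ℝ (Xi i))
    (hXne : ∀ i, (Xi i).Nonempty)
    (D : Fin N → ℝ) (hD : ∀ i, Metric.diam (Xi i) = D i)
    (g : ∀ i, Blk nb i → ℝ) (hgconv : ∀ i, ConvexOn ℝ (Xi i) (g i))
    (F : EuclideanSpace ℝ (Fin m) → ℝ)
    (hFconv : ConvexOn ℝ Set.univ F)
    (gradF : EuclideanSpace ℝ (Fin m) → EuclideanSpace ℝ (Fin m))
    (hgradF : ∀ x : FullSpc nb, (∀ i, x i ∈ Xi i) → HasGradientAt F (gradF (A x)) (A x))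
    (LF : ℝ)
    (hLF : ∀ x : FullSpc nb, (∀ i, x i ∈ Xi i) → ∀ y : FullSpc nb, (∀ i, y i ∈ Xi i) →
      ‖gradF (A x) - gradF (A y)‖ ≤ LF * ‖A x - A y‖)
    -- blockwise linear-oracle selections `p_i(x) ∈ argmin_{p_i ∈ X_i} {⟨∇_i f(x), p_i⟩ + g_i(p_i)}`
    (piSel : ∀ i : Fin N, FullSpc nb → Blk nb i)
    (hpiSel : ∀ (i : Fin N) (x : FullSpc nb), (∀ j, x j ∈ Xi j) →
      piSel i x ∈ Xi i ∧ ∀ q ∈ Xi i,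
        ⟪gradBlk nb A gradF i x, piSel i x⟫ + g i (piSel i x) ≤
          ⟪gradBlk nb A gradF i x, q⟫ + g i q) :
    ∀ (i : Fin N) (x y : FullSpc nb), (∀ j, x j ∈ Xi j) → (∀ j, y j ∈ Xi j) →
      x i = y i →
      |(⟪gradBlk nb A gradF i x, x i - piSel i x⟫ + g i (x i) - g i (piSel i x)) -
          (⟪gradBlk nb A gradF i y, y i - piSel i y⟫ + g i (y i) - g i (piSel i y))| ≤
        LF * D i * ‖A.comp (blkIncl nb i)‖ * ‖A (x - y)‖ := by
  intro i x y hx hy hxy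
  have key : ∀ x y : FullSpc nb, (∀ j, x j ∈ Xi j) → (∀ j, y j ∈ Xi j) → x i = y i →
      (⟪gradBlk nb A gradF i x, x i - piSel i x⟫ + g i (x i) - g i (piSel i x)) -
          (⟪gradBlk nb A gradF i y, y i - piSel i y⟫ + g i (y i) - g i (piSel i y)) ≤
        LF * D i * ‖A.comp (blkIncl nb i)‖ * ‖A (x - y)‖ := by
    intro x y hx hy hxy
    obtain ⟨hpx, -⟩ := hpiSel i x hx
    obtain ⟨-, hmin⟩ := hpiSel i y hy
    have h1 := hmin _ hpx
    have h2 : ‖gradBlk nb A gradF i x - gradBlk nb A gradF i y‖ ≤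
        ‖A.comp (blkIncl nb i)‖ * (LF * ‖A (x - y)‖) := by
      unfold gradBlk
      rw [← map_sub]
      refine (ContinuousLinearMap.le_opNorm _ _).trans ?_
      rw [LinearIsometryEquiv.norm_map, map_sub A]
      exact mul_le_mul_of_nonneg_left (hLF x hx y hy) (norm_nonneg _)
    have h3 : ‖x i - piSel i x‖ ≤ D i := by
      rw [← hD i, ← dist_eq_norm]
      exact Metric.dist_le_diam_of_mem (hXcpt i).isBounded (hx i) hpx
    have h4 := real_inner_le_norm (gradBlk nb A gradF i x - gradBlk nb A gradF i y)
      (x i - piSel i x)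
    have h5 := mul_le_mul h2 h3 (norm_nonneg _) ((norm_nonneg _).trans h2)
    rw [← hxy]
    simp only [inner_sub_left, inner_sub_right] at h4 ⊢
    linarith
  rw [abs_le]
  have a := key x y hx hy hxy
  have b := key y x hy hx hxy.symm
  rw [← neg_sub x y, map_neg, norm_neg] at b
  constructor <;> linarith
end
end

section
/- Descent inequality for CBCG with arbitrary stepsizes: for every k ≥ 0 and every i ∈ {1,…,N}, H(x^{k,i}) ≤ H(x^{k,i−1}) − α_i^k S_i(x^{k,i−1}) + ((α_i^k)² β_i / 2) ‖A_i(p_i^k − x_i^k)‖². -/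
open scoped RealInnerProductSpace BigOperators
noncomputable section

lemma aux_descent (φ φ' : ℝ → ℝ) (C : ℝ) (h : ∀ t ∈ Set.Icc (0:ℝ) 1, HasDerivAt φ (φ' t) t)
    (hb : ∀ t ∈ Set.Icc (0:ℝ) 1, φ' t - φ' 0 ≤ C * t) (a : ℝ) (ha : a ∈ Set.Icc (0:ℝ) 1) :
    φ a ≤ φ 0 + a * φ' 0 + C * a ^ 2 / 2 := by
  have hd : ∀ t ∈ Set.Icc (0:ℝ) 1,
      HasDerivAt (fun t => φ t - t * φ' 0 - C * t ^ 2 / 2) (φ' t - φ' 0 - C * t) t := by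
    intro t ht
    have h1 := (h t ht).sub ((hasDerivAt_id t).mul_const (φ' 0))
    have h2 := h1.sub ((((hasDerivAt_id t).pow 2).const_mul C).div_const 2)
    refine h2.congr_deriv ?_
    simp
    ring
  have hanti : AntitoneOn (fun t => φ t - t * φ' 0 - C * t ^ 2 / 2) (Set.Icc (0:ℝ) 1) := by
    apply antitoneOn_of_deriv_nonpos (convex_Icc 0 1)
    · intro t ht
      exact (hd t ht).continuousAt.continuousWithinAt
    · intro t ht
      exact (hd t (interior_subset ht)).differentiableAt.differentiableWithinAt
    · intro t ht
      rw [(hd t (interior_subset ht)).deriv]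
      linarith [hb t (interior_subset ht)]
  have := hanti (Set.left_mem_Icc.2 zero_le_one) ha ha.1
  simp only at this
  nlinarith

lemma blkIncl_same {N : ℕ} (nb : Fin N → ℕ) (i : Fin N) (d : Blk nb i) :
    (blkIncl nb i d) i = d := by
  simp [blkIncl]

lemma blkIncl_ne {N : ℕ} (nb : Fin N → ℕ) (i j : Fin N) (hij : j ≠ i) (d : Blk nb i) :
    (blkIncl nb i d) j = 0 := by
  simp [blkIncl, hij]

lemma step_mem {N : ℕ} (nb : Fin N → ℕ) (Xi : ∀ i, Set (Blk nb i))
    (hXconv : ∀ i, Convex ℝ (Xi i)) (z : FullSpc nb) (hz : ∀ j, z j ∈ Xi j)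
    (i : Fin N) (p : Blk nb i) (hp : p ∈ Xi i) (t : ℝ) (ht : t ∈ Set.Icc (0:ℝ) 1) :
    ∀ j, (z + blkIncl nb i (t • (p - z i))) j ∈ Xi j := by
  intro j
  rw [PiLp.add_apply]
  by_cases hj : j = i
  · subst hj
    rw [blkIncl_same]
    exact (hXconv j).add_smul_sub_mem (hz j) hp ht
  · rw [blkIncl_ne nb i j hj, add_zero]
    exact hz j

/-- **Descent inequality for CBCG with arbitrary stepsizes**: for every `k ≥ 0` and every block
`i`, `H(x^{k,i}) ≤ H(x^{k,i−1}) − α_i^k S_i(x^{k,i−1}) + ((α_i^k)² β_i / 2) ‖A_i(p_i^k − x_i^k)‖²`. -/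
theorem cbcg_descent_inequality
    {N m : ℕ} (hN : 0 < N) (nb : Fin N → ℕ) (hnb : ∀ i, 0 < nb i)
    (A : FullSpc nb →L[ℝ] EuclideanSpace ℝ (Fin m))
    (Xi : ∀ i, Set (Blk nb i))
    (hXcpt : ∀ i, IsCompact (Xi i)) (hXconv : ∀ i, Convex ℝ (Xi i))
    (hXne : ∀ i, (Xi i).Nonempty)
    (D : Fin N → ℝ) (hD : ∀ i, Metric.diam (Xi i) = D i)
    (g : ∀ i, Blk nb i → ℝ) (hgconv : ∀ i, ConvexOn ℝ (Xi i) (g i))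
    (F : EuclideanSpace ℝ (Fin m) → ℝ)
    (hFconv : ConvexOn ℝ Set.univ F)
    (gradF : EuclideanSpace ℝ (Fin m) → EuclideanSpace ℝ (Fin m))
    (hgradF : ∀ x : FullSpc nb, (∀ i, x i ∈ Xi i) → HasGradientAt F (gradF (A x)) (A x))
    (LF : ℝ)
    (hLF : ∀ x : FullSpc nb, (∀ i, x i ∈ Xi i) → ∀ y : FullSpc nb, (∀ i, y i ∈ Xi i) →
      ‖gradF (A x) - gradF (A y)‖ ≤ LF * ‖A x - A y‖)
    (β : Fin N → ℝ) (hβpos : ∀ i, 0 < β i)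
    (hβ : ∀ (i : Fin N) (z : FullSpc nb), (∀ j, z j ∈ Xi j) →
      ∀ h : Blk nb i, (∀ j, (z + blkIncl nb i h) j ∈ Xi j) →
      ‖gradF (A (z + blkIncl nb i h)) - gradF (A z)‖ ≤ β i * ‖A.comp (blkIncl nb i) h‖)
    -- blockwise linear-oracle selections `p_i(x) ∈ argmin_{p_i ∈ X_i} {⟨∇_i f(x), p_i⟩ + g_i(p_i)}`
    (piSel : ∀ i : Fin N, FullSpc nb → Blk nb i)
    (hpiSel : ∀ (i : Fin N) (z : FullSpc nb), (∀ j, z j ∈ Xi j) →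
      piSel i z ∈ Xi i ∧ ∀ q ∈ Xi i,
        ⟪gradBlk nb A gradF i z, piSel i z⟫ + g i (piSel i z) ≤
          ⟪gradBlk nb A gradF i z, q⟫ + g i q)
    -- the CBCG iterates: `x k` is `x^k` and `y k i` is `x^{k,i}` for `0 ≤ i ≤ N`
    (x : ℕ → FullSpc nb) (y : ℕ → ℕ → FullSpc nb)
    (pk : ℕ → (i : Fin N) → Blk nb i) (α : ℕ → Fin N → ℝ)
    (hx0 : ∀ i, x 0 i ∈ Xi i)
    (hy0 : ∀ k, y k 0 = x k)
    (hyN : ∀ k, x (k + 1) = y k N)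
    (hα01 : ∀ k i, α k i ∈ Set.Icc (0 : ℝ) 1)
    (hpk : ∀ (k : ℕ) (i : Fin N), pk k i ∈ Xi i ∧ ∀ q ∈ Xi i,
      ⟪gradBlk nb A gradF i (y k i.val), pk k i⟫ + g i (pk k i) ≤
        ⟪gradBlk nb A gradF i (y k i.val), q⟫ + g i q)
    (hupd : ∀ (k : ℕ) (i : Fin N),
      y k (i.val + 1) = y k i.val + α k i • blkIncl nb i (pk k i - y k i.val i))
    :
    ∀ (k : ℕ) (i : Fin N),
      F (A (y k (i.val + 1))) + ∑ j, g j (y k (i.val + 1) j) ≤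
        F (A (y k i.val)) + ∑ j, g j (y k i.val j) -
          α k i * (⟪gradBlk nb A gradF i (y k i.val), y k i.val i - piSel i (y k i.val)⟫ +
            g i (y k i.val i) - g i (piSel i (y k i.val))) +
          (α k i) ^ 2 * β i / 2 * ‖A.comp (blkIncl nb i) (pk k i - x k i)‖ ^ 2 := by
  have hupd' : ∀ (k : ℕ) (i : Fin N),
      y k (i.val + 1) = y k i.val + blkIncl nb i (α k i • (pk k i - y k i.val i)) := by
    intro k i
    rw [hupd, map_smul]
  have hrow : ∀ k, (∀ j, x k j ∈ Xi j) → ∀ i, i ≤ N →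
      (∀ j, y k i j ∈ Xi j) ∧ ∀ j : Fin N, i ≤ j.val → y k i j = x k j := by
    intro k hk i
    induction i with
    | zero =>
      intro _
      rw [hy0]
      exact ⟨hk, fun _ _ => rfl⟩
    | succ i ih =>
      intro hi
      obtain ⟨h1, h2⟩ := ih (by omega)
      have e := hupd' k ⟨i, hi⟩
      simp only at e
      rw [e]
      refine ⟨step_mem nb Xi hXconv _ h1 _ _ (hpk k ⟨i, hi⟩).1 _ (hα01 k _), ?_⟩
      intro j hj
      have hne : j ≠ ⟨i, hi⟩ := by
        intro h
        rw [h] at hj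
        simp at hj
      rw [PiLp.add_apply, blkIncl_ne nb _ j hne, add_zero]
      exact h2 j (by omega)
  have hxk : ∀ k, ∀ j, x k j ∈ Xi j := by
    intro k
    induction k with
    | zero => exact hx0
    | succ k ih =>
      rw [hyN]
      exact (hrow k ih N le_rfl).1
  intro k i
  obtain ⟨hz, hzx⟩ := hrow k (hxk k) i.val i.isLt.le
  rw [← hzx i le_rfl, hupd']
  obtain ⟨hp, hpmin⟩ := hpk k i
  have hs := hpmin _ (hpiSel i _ hz).1
  have ha := hα01 k i
  generalize y k i.val = z at *
  generalize pk k i = p at *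
  generalize piSel i z = s at *
  generalize α k i = a at *
  have hmem := step_mem nb Xi hXconv z hz i p hp
  set v := A.comp (blkIncl nb i) (p - z i) with hv
  have hA : ∀ t : ℝ, A (z + blkIncl nb i (t • (p - z i))) = A z + t • v := by
    intro t
    simp [hv]
  have hin : ∀ w : EuclideanSpace ℝ (Fin m), gradF (A z) = w →
      ⟪gradBlk nb A gradF i z, p - z i⟫ = ⟪w, v⟫ := by
    intro w hw
    rw [gradBlk, ContinuousLinearMap.adjoint_inner_left, hw]
  have hF : F (A z + a • v) ≤ F (A z) + a * ⟪gradF (A z), v⟫ + (β i * ‖v‖ ^ 2) * a ^ 2 / 2 := by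
    have := aux_descent (fun t => F (A z + t • v)) (fun t => ⟪gradF (A z + t • v), v⟫)
      (β i * ‖v‖ ^ 2) ?_ ?_ a ha
    · simpa using this
    · intro t ht
      have h1 := hgradF _ (hmem t ht)
      rw [hA] at h1
      have h2 : HasDerivAt (fun t : ℝ => A z + t • v) v t := by
        simpa using ((hasDerivAt_id t).smul_const v).const_add (A z)
      have h3 := h1.hasFDerivAt.comp_hasDerivAt t h2
      exact h3.congr_deriv (by simp)
    · intro t ht
      have h1 := hβ i z hz _ (hmem t ht)
      rw [hA, map_smul, norm_smul, Real.norm_eq_abs, abs_of_nonneg ht.1, ← hv] at h1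
      simp only [zero_smul, add_zero]
      rw [← inner_sub_left]
      calc _ ≤ ‖gradF (A z + t • v) - gradF (A z)‖ * ‖v‖ := real_inner_le_norm _ _
        _ ≤ β i * (t * ‖v‖) * ‖v‖ := by gcongr
        _ = _ := by ring
  have hg : ∑ j, g j ((z + blkIncl nb i (a • (p - z i))) j) ≤
      ∑ j, g j (z j) + a * (g i p - g i (z i)) := by
    rw [← Finset.add_sum_erase _ _ (Finset.mem_univ i),
      ← Finset.add_sum_erase _ (fun j => g j (z j)) (Finset.mem_univ i)]
    have h1 : ∑ j ∈ Finset.univ.erase i, g j ((z + blkIncl nb i (a • (p - z i))) j) =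
        ∑ j ∈ Finset.univ.erase i, g j (z j) := by
      apply Finset.sum_congr rfl
      intro j hj
      rw [PiLp.add_apply, blkIncl_ne nb i j (Finset.ne_of_mem_erase hj), add_zero]
    have h2 : g i ((z + blkIncl nb i (a • (p - z i))) i) ≤ (1 - a) * g i (z i) + a * g i p := by
      have h3 := (hgconv i).2 (hz i) hp (sub_nonneg.2 ha.2) ha.1 (by ring)
      rw [PiLp.add_apply, blkIncl_same]
      have h4 : z i + a • (p - z i) = (1 - a) • z i + a • p := by module
      rw [h4]
      simpa using h3
    rw [h1]
    linarith
  rw [hA]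
  have hi := hin _ rfl
  rw [inner_sub_right] at hi ⊢
  rw [← hi] at hF
  have := mul_le_mul_of_nonneg_left hs ha.1
  linarith
end
end

section
/- Technical sequence lemma for the predefined stepsize: let C > 0 and let (a_k)_{k≥0} and (b_k)_{k≥0} be real sequences with 0 ≤ a_k ≤ b_k for all k, satisfying a_{k+1} ≤ a_k − t_k b_k + (C/2) t_k² for all k ≥ 0, where t_k = 2/(k+2). Then (a) a_k ≤ 2C/(k+1) for all k ≥ 1; and (b) for every n ≥ 1, min_{k = ⌊n/2⌋,…,n} b_k ≤ 8C/n. -/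
/-- **Technical sequence lemma for the predefined stepsize** (cf. Beck 2012, Lemma 1):
if `0 ≤ a_k ≤ b_k`, `a_{k+1} ≤ a_k − t_k b_k + (C/2) t_k²` with `t_k = 2/(k+2)` and `C > 0`, then
(a) `a_k ≤ 2C/(k+1)` for all `k ≥ 1`, and (b) for every `n ≥ 1`,
`min_{k = ⌊n/2⌋,…,n} b_k ≤ 8C/n`. -/
theorem predefined_stepsize_sequence_lemma
    (C : ℝ) (hC : 0 < C) (a b : ℕ → ℝ)
    (ha : ∀ k, 0 ≤ a k) (hab : ∀ k, a k ≤ b k)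
    (hrec : ∀ k : ℕ, a (k + 1) ≤ a k - (2 / ((k : ℝ) + 2)) * b k +
      C / 2 * (2 / ((k : ℝ) + 2)) ^ 2) :
    (∀ k : ℕ, 1 ≤ k → a k ≤ 2 * C / ((k : ℝ) + 1)) ∧
    (∀ n : ℕ, 1 ≤ n → ∃ k : ℕ, n / 2 ≤ k ∧ k ≤ n ∧ b k ≤ 8 * C / (n : ℝ)) := by
  have hA : ∀ k : ℕ, 1 ≤ k → a k ≤ 2 * C / ((k : ℝ) + 1) := by
    intro k hk
    induction k, hk using Nat.le_induction with
    | base =>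
      have h := hrec 0
      have := hab 0
      norm_num at h ⊢
      linarith
    | succ k hk ih =>
      have h := hrec k
      have hp : (0 : ℝ) < (k : ℝ) + 2 := by positivity
      have h1 : (2 / ((k : ℝ) + 2)) * a k ≤ (2 / ((k : ℝ) + 2)) * b k :=
        mul_le_mul_of_nonneg_left (hab k) (by positivity)
      have h2 : (k / ((k : ℝ) + 2)) * a k ≤ (k / ((k : ℝ) + 2)) * (2 * C / ((k : ℝ) + 1)) :=
        mul_le_mul_of_nonneg_left ih (by positivity)
      have h3 : a k - (2 / ((k : ℝ) + 2)) * a k = (k / ((k : ℝ) + 2)) * a k := by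
        field_simp
        ring
      have h4 : 2 * C / (((k + 1 : ℕ) : ℝ) + 1) - ((k / ((k : ℝ) + 2)) * (2 * C / ((k : ℝ) + 1))
          + C / 2 * (2 / ((k : ℝ) + 2)) ^ 2) = 2 * C / (((k : ℝ) + 1) * (k + 2) ^ 2) := by
        have : (((k + 1 : ℕ) : ℝ) + 1) = (k : ℝ) + 2 := by push_cast; ring
        rw [this]
        field_simp
        ring
      have h5 : 0 ≤ 2 * C / (((k : ℝ) + 1) * (k + 2) ^ 2) := by positivity
      linarith
  refine ⟨hA, fun n hn => ?_⟩
  by_contra! hcon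
  rcases Nat.lt_or_ge n 2 with hn2 | hn2
  · obtain rfl : n = 1 := by omega
    have h0 := hrec 0
    have h1 := hrec 1
    have := hab 0
    have := ha 2
    have h3 := hcon 1 (by norm_num) le_rfl
    norm_num at h0 h1 h3
    linarith
  set m := n / 2 with hm
  have hm1 : 1 ≤ m := by omega
  have key : ∀ j : ℕ, m + j ≤ n + 1 → a (m + j) + 8 * C / n * (2 / ((n : ℝ) + 2)) * j ≤
      2 * C / ((m : ℝ) + 1) + 2 * C * (1 / ((m : ℝ) + 1) - 1 / ((m : ℝ) + j + 1)) := by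
    intro j
    induction j with
    | zero =>
      intro _
      have := hA m hm1
      simpa using this
    | succ j ih =>
      intro hj
      have ih := ih (by omega)
      have h := hrec (m + j)
      have hb := hcon (m + j) (by omega) (by omega)
      have hjn : (m : ℝ) + j ≤ n := by
        have : m + j ≤ n := by omega
        exact_mod_cast this
      push_cast at h ⊢
      have h1 : 8 * C / n * (2 / ((n : ℝ) + 2)) ≤ b (m + j) * (2 / ((m : ℝ) + j + 2)) := by
        have : 0 ≤ 8 * C / (n : ℝ) := by positivity
        gcongr
        linarith
      have h2 : 2 * C * (1 / ((m : ℝ) + j + 1) - 1 / ((m : ℝ) + (j + 1) + 1))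
          - C / 2 * (2 / ((m : ℝ) + j + 2)) ^ 2
          = 2 * C / (((m : ℝ) + j + 1) * (m + j + 2) ^ 2) := by
        have : (m : ℝ) + (j + 1) + 1 = m + j + 2 := by ring
        rw [this]
        field_simp
        ring
      have h3 : 0 ≤ 2 * C / (((m : ℝ) + j + 1) * (m + j + 2) ^ 2) := by positivity
      rw [← add_assoc m j 1]
      linarith
  have hk := key (n + 1 - m) (by omega)
  have e : m + (n + 1 - m) = n + 1 := by omega
  have e' : (m : ℝ) + ((n + 1 - m : ℕ) : ℝ) = n + 1 := by exact_mod_cast e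
  rw [e, e'] at hk
  have hnpos : (0 : ℝ) < n := by positivity
  have hm2 : (n : ℝ) + 1 ≤ 2 * (m + 1) := by
    have : n + 1 ≤ 2 * (m + 1) := by omega
    exact_mod_cast this
  have hm3 : 2 * (m : ℝ) ≤ n := by
    have : 2 * m ≤ n := by omega
    exact_mod_cast this
  have hl : 8 * C / n ≤ 8 * C / n * (2 / ((n : ℝ) + 2)) * ((n + 1 - m : ℕ) : ℝ) := by
    rw [mul_assoc]
    apply le_mul_of_one_le_right (by positivity)
    rw [div_mul_eq_mul_div, le_div_iff₀ (by positivity)]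
    linarith
  have hr : 1 / ((m : ℝ) + 1) ≤ 2 / n := by
    rw [div_le_div_iff₀ (by positivity) hnpos]
    linarith
  have hr2 : C * (1 / ((m : ℝ) + 1)) ≤ C * (2 / n) := mul_le_mul_of_nonneg_left hr hC.le
  have hq : 0 < 2 * C * (1 / ((n : ℝ) + 1 + 1)) := by positivity
  have e1 : 8 * C / (n : ℝ) = 4 * (C * (2 / n)) := by ring
  have e2 : 2 * C / ((m : ℝ) + 1) = 2 * (C * (1 / ((m : ℝ) + 1))) := by ring
  have := ha (n + 1)
  rw [mul_sub] at hk
  linarith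
end

section
/- Block descent for CBCG with adaptive stepsize: for every k ≥ 0 and every i ∈ {1,…,N}, H(x^{k,i−1}) − H(x^{k,i}) ≥ (α_i^k/2) S_i(x^{k,i−1}) ≥ ((α_i^k)² β_i / 2) ‖A_i(p_i^k − x_i^k)‖². -/
open scoped RealInnerProductSpace BigOperators
noncomputable section

lemma blkIncl_same_aux {N : ℕ} (nb : Fin N → ℕ) (i : Fin N) (h : Blk nb i) :
    (blkIncl nb i h) i = h := by
  simp [blkIncl]

lemma blkIncl_ne_aux {N : ℕ} (nb : Fin N → ℕ) (i j : Fin N) (hij : j ≠ i) (h : Blk nb i) :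
    (blkIncl nb i h) j = 0 := by
  simp [blkIncl, Pi.single_eq_of_ne hij]

lemma descent_one_dim_aux (φ φ' : ℝ → ℝ) (C a : ℝ) (ha : a ∈ Set.Icc (0 : ℝ) 1)
    (hd : ∀ t ∈ Set.Icc (0 : ℝ) 1, HasDerivAt φ (φ' t) t)
    (hb : ∀ t ∈ Set.Icc (0 : ℝ) 1, φ' t ≤ φ' 0 + C * t) :
    φ a ≤ φ 0 + a * φ' 0 + C * a ^ 2 / 2 := by
  have hψ : ∀ t ∈ Set.Icc (0 : ℝ) 1,
      HasDerivAt (fun t => φ t - t * φ' 0 - C / 2 * t ^ 2) (φ' t - φ' 0 - C * t) t := by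
    intro t ht
    have h1 := ((hd t ht).sub ((hasDerivAt_id t).mul_const (φ' 0))).sub
      (((hasDerivAt_id t).pow 2).const_mul (C / 2))
    refine h1.congr_deriv ?_
    simp only [id_eq]
    ring
  have hanti : AntitoneOn (fun t => φ t - t * φ' 0 - C / 2 * t ^ 2) (Set.Icc (0 : ℝ) 1) := by
    apply antitoneOn_of_deriv_nonpos (convex_Icc 0 1)
    · intro t ht
      exact (hψ t ht).continuousAt.continuousWithinAt
    · intro t ht
      exact (hψ t (interior_subset ht)).differentiableAt.differentiableWithinAt
    · intro t ht
      rw [(hψ t (interior_subset ht)).deriv]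
      linarith [hb t (interior_subset ht)]
  have := hanti (Set.left_mem_Icc.mpr zero_le_one) ha ha.1
  simp only at this
  linarith

/-- **Block descent for CBCG with adaptive stepsize**: for every `k ≥ 0` and every block `i`,
`H(x^{k,i−1}) − H(x^{k,i}) ≥ (α_i^k/2) S_i(x^{k,i−1}) ≥ ((α_i^k)² β_i / 2) ‖A_i(p_i^k − x_i^k)‖²`. -/
theorem cbcg_adaptive_block_descent
    {N m : ℕ} (hN : 0 < N) (nb : Fin N → ℕ) (hnb : ∀ i, 0 < nb i)
    (A : FullSpc nb →L[ℝ] EuclideanSpace ℝ (Fin m))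
    (Xi : ∀ i, Set (Blk nb i))
    (hXcpt : ∀ i, IsCompact (Xi i)) (hXconv : ∀ i, Convex ℝ (Xi i))
    (hXne : ∀ i, (Xi i).Nonempty)
    (D : Fin N → ℝ) (hD : ∀ i, Metric.diam (Xi i) = D i)
    (g : ∀ i, Blk nb i → ℝ) (hgconv : ∀ i, ConvexOn ℝ (Xi i) (g i))
    (F : EuclideanSpace ℝ (Fin m) → ℝ)
    (hFconv : ConvexOn ℝ Set.univ F)
    (gradF : EuclideanSpace ℝ (Fin m) → EuclideanSpace ℝ (Fin m))
    (hgradF : ∀ x : FullSpc nb, (∀ i, x i ∈ Xi i) → HasGradientAt F (gradF (A x)) (A x))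
    (LF : ℝ)
    (hLF : ∀ x : FullSpc nb, (∀ i, x i ∈ Xi i) → ∀ y : FullSpc nb, (∀ i, y i ∈ Xi i) →
      ‖gradF (A x) - gradF (A y)‖ ≤ LF * ‖A x - A y‖)
    (β : Fin N → ℝ) (hβpos : ∀ i, 0 < β i)
    (hβ : ∀ (i : Fin N) (z : FullSpc nb), (∀ j, z j ∈ Xi j) →
      ∀ h : Blk nb i, (∀ j, (z + blkIncl nb i h) j ∈ Xi j) →
      ‖gradF (A (z + blkIncl nb i h)) - gradF (A z)‖ ≤ β i * ‖A.comp (blkIncl nb i) h‖)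
    -- blockwise linear-oracle selections `p_i(x) ∈ argmin_{p_i ∈ X_i} {⟨∇_i f(x), p_i⟩ + g_i(p_i)}`
    (piSel : ∀ i : Fin N, FullSpc nb → Blk nb i)
    (hpiSel : ∀ (i : Fin N) (z : FullSpc nb), (∀ j, z j ∈ Xi j) →
      piSel i z ∈ Xi i ∧ ∀ q ∈ Xi i,
        ⟪gradBlk nb A gradF i z, piSel i z⟫ + g i (piSel i z) ≤
          ⟪gradBlk nb A gradF i z, q⟫ + g i q)
    -- the CBCG iterates: `x k` is `x^k` and `y k i` is `x^{k,i}` for `0 ≤ i ≤ N`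
    (x : ℕ → FullSpc nb) (y : ℕ → ℕ → FullSpc nb)
    (pk : ℕ → (i : Fin N) → Blk nb i) (α : ℕ → Fin N → ℝ)
    (hx0 : ∀ i, x 0 i ∈ Xi i)
    (hy0 : ∀ k, y k 0 = x k)
    (hyN : ∀ k, x (k + 1) = y k N)
    (hα01 : ∀ k i, α k i ∈ Set.Icc (0 : ℝ) 1)
    (hpk : ∀ (k : ℕ) (i : Fin N), pk k i ∈ Xi i ∧ ∀ q ∈ Xi i,
      ⟪gradBlk nb A gradF i (y k i.val), pk k i⟫ + g i (pk k i) ≤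
        ⟪gradBlk nb A gradF i (y k i.val), q⟫ + g i q)
    (hupd : ∀ (k : ℕ) (i : Fin N),
      y k (i.val + 1) = y k i.val + α k i • blkIncl nb i (pk k i - y k i.val i))
    -- the adaptive stepsize `α_i^k = min{ S_i(x^{k,i−1}) / (β_i ‖A_i(p_i^k − x_i^k)‖²), 1 }`
    (hαada : ∀ (k : ℕ) (i : Fin N), α k i =
      min ((⟪gradBlk nb A gradF i (y k i.val), y k i.val i - piSel i (y k i.val)⟫ +
          g i (y k i.val i) - g i (piSel i (y k i.val))) /
        (β i * ‖A.comp (blkIncl nb i) (pk k i - x k i)‖ ^ 2)) 1)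
    :
    ∀ (k : ℕ) (i : Fin N),
      (α k i / 2) * (⟪gradBlk nb A gradF i (y k i.val), y k i.val i - piSel i (y k i.val)⟫ +
          g i (y k i.val i) - g i (piSel i (y k i.val))) ≤
        (F (A (y k i.val)) + ∑ j, g j (y k i.val j)) -
          (F (A (y k (i.val + 1))) + ∑ j, g j (y k (i.val + 1) j)) ∧
      (α k i) ^ 2 * β i / 2 * ‖A.comp (blkIncl nb i) (pk k i - x k i)‖ ^ 2 ≤
        (α k i / 2) * (⟪gradBlk nb A gradF i (y k i.val), y k i.val i - piSel i (y k i.val)⟫ +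
          g i (y k i.val i) - g i (piSel i (y k i.val))) := by
  -- feasibility of segments
  have hseg : ∀ (i : Fin N) (z : FullSpc nb), (∀ j, z j ∈ Xi j) → ∀ p ∈ Xi i,
      ∀ t ∈ Set.Icc (0 : ℝ) 1, ∀ j, (z + blkIncl nb i (t • (p - z i))) j ∈ Xi j := by
    intro i z hz p hp t ht j
    by_cases hij : j = i
    · subst hij
      rw [PiLp.add_apply, blkIncl_same_aux]
      exact (hXconv j).add_smul_sub_mem (hz j) hp ht
    · rw [PiLp.add_apply, blkIncl_ne_aux nb i j hij, add_zero]
      exact hz j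
  have hupd' : ∀ (k : ℕ) (i : Fin N),
      y k (i.val + 1) = y k i.val + blkIncl nb i (α k i • (pk k i - y k i.val i)) := by
    intro k i
    rw [hupd k i, map_smul]
  have hyfeas : ∀ k, (∀ j, x k j ∈ Xi j) → ∀ l, l ≤ N → ∀ j, y k l j ∈ Xi j := by
    intro k hk l
    induction l with
    | zero => intro _; rw [hy0]; exact hk
    | succ l ih =>
      intro hl
      have h := hupd' k ⟨l, hl⟩
      simp only at h
      rw [h]
      exact hseg ⟨l, hl⟩ _ (ih (by omega)) _ (hpk k ⟨l, hl⟩).1 _ (hα01 k ⟨l, hl⟩)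
  have hxfeas : ∀ k, ∀ j, x k j ∈ Xi j := by
    intro k
    induction k with
    | zero => exact hx0
    | succ k ih => rw [hyN]; exact hyfeas k ih N le_rfl
  have hyx : ∀ k (i : Fin N), ∀ l, l ≤ i.val → y k l i = x k i := by
    intro k i l
    induction l with
    | zero => intro _; rw [hy0]
    | succ l ih =>
      intro hl
      have h := hupd' k ⟨l, by omega⟩
      simp only at h
      rw [h, PiLp.add_apply, blkIncl_ne_aux _ _ _ _, add_zero]
      · exact ih (by omega)
      · intro hh
        have := congrArg Fin.val hh
        simp only at this
        omega
  intro k i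
  have hz := hyfeas k (hxfeas k) i.val i.isLt.le
  have hαi := hαada k i
  have ha := hα01 k i
  have hu := hupd' k i
  obtain ⟨hpX, hpmin⟩ := hpk k i
  obtain ⟨hqX, hqmin⟩ := hpiSel i _ hz
  rw [← hyx k i i.val le_rfl] at hαi ⊢
  rw [hu]
  generalize y k i.val = z at *
  generalize pk k i = p at *
  generalize α k i = a at *
  generalize piSel i z = q at *
  have e1 := hpmin q hqX
  have e2 := hqmin p hpX
  have e3 := hqmin (z i) (hz i)
  have hS : ⟪gradBlk nb A gradF i z, z i - q⟫ + g i (z i) - g i q =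
      ⟪gradBlk nb A gradF i z, z i - p⟫ + g i (z i) - g i p := by
    rw [inner_sub_right, inner_sub_right]; linarith
  have hS0 : 0 ≤ ⟪gradBlk nb A gradF i z, z i - q⟫ + g i (z i) - g i q := by
    rw [inner_sub_right]; linarith
  have hSv : ⟪gradBlk nb A gradF i z, z i - p⟫ =
      - ⟪gradF (A z), A.comp (blkIncl nb i) (p - z i)⟫ := by
    rw [gradBlk, ContinuousLinearMap.adjoint_inner_left, ← inner_neg_right, ← map_neg, neg_sub]
  -- key stepsize bound
  have hstep : a * (β i * ‖A.comp (blkIncl nb i) (p - z i)‖ ^ 2) ≤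
      ⟪gradBlk nb A gradF i z, z i - q⟫ + g i (z i) - g i q := by
    have hB : 0 ≤ β i * ‖A.comp (blkIncl nb i) (p - z i)‖ ^ 2 :=
      mul_nonneg (hβpos i).le (sq_nonneg _)
    rcases hB.eq_or_lt with hB | hB
    · rw [← hB, mul_zero]; exact hS0
    · rw [← le_div_iff₀ hB, hαi]; exact min_le_left _ _
  -- descent
  have hdesc : F (A (z + blkIncl nb i (a • (p - z i)))) ≤ F (A z) +
      a * ⟪gradF (A z), A.comp (blkIncl nb i) (p - z i)⟫ +
      (β i * ‖A.comp (blkIncl nb i) (p - z i)‖ ^ 2) * a ^ 2 / 2 := by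
    have hlin : ∀ t : ℝ, A (z + blkIncl nb i (t • (p - z i))) =
        A z + t • A.comp (blkIncl nb i) (p - z i) := by
      intro t
      simp only [map_add, map_smul, ContinuousLinearMap.comp_apply]
    have := descent_one_dim_aux (fun t => F (A z + t • A.comp (blkIncl nb i) (p - z i)))
      (fun t => ⟪gradF (A z + t • A.comp (blkIncl nb i) (p - z i)),
        A.comp (blkIncl nb i) (p - z i)⟫)
      (β i * ‖A.comp (blkIncl nb i) (p - z i)‖ ^ 2) a ha ?_ ?_
    · simp only [zero_smul, add_zero] at this
      rw [hlin]; exact this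
    · intro t ht
      have hg := (hgradF _ (hseg i z hz p hpX t ht)).hasFDerivAt
      rw [hlin] at hg
      have hl : HasDerivAt (fun t : ℝ => A z + t • A.comp (blkIncl nb i) (p - z i))
          (A.comp (blkIncl nb i) (p - z i)) t := by
        have := ((hasDerivAt_id t).smul_const (A.comp (blkIncl nb i) (p - z i))).const_add (A z)
        simpa using this
      have := hg.comp_hasDerivAt t hl
      exact this.congr_deriv (InnerProductSpace.toDual_apply_apply)
    · intro t ht
      have hb := hβ i z hz _ (hseg i z hz p hpX t ht)
      rw [hlin, map_smul, norm_smul, Real.norm_of_nonneg ht.1] at hb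
      simp only [zero_smul, add_zero]
      have hc := real_inner_le_norm (gradF (A z + t • A.comp (blkIncl nb i) (p - z i)) -
        gradF (A z)) (A.comp (blkIncl nb i) (p - z i))
      rw [inner_sub_left] at hc
      have hm := mul_le_mul_of_nonneg_right hb (norm_nonneg (A.comp (blkIncl nb i) (p - z i)))
      nlinarith [hc, hm]
  have hgi : g i (z i + a • (p - z i)) ≤ g i (z i) + a * (g i p - g i (z i)) := by
    have := (hgconv i).2 (hz i) hpX (sub_nonneg.mpr ha.2) ha.1 (by ring)
    have he : z i + a • (p - z i) = (1 - a) • z i + a • p := by module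
    rw [he]
    simp only [smul_eq_mul] at this
    linarith
  have hsum : ∑ j, g j ((z + blkIncl nb i (a • (p - z i))) j) - ∑ j, g j (z j) =
      g i (z i + a • (p - z i)) - g i (z i) := by
    rw [← Finset.sum_sub_distrib, Finset.sum_eq_single i]
    · rw [PiLp.add_apply, blkIncl_same_aux]
    · intro j _ hj
      rw [PiLp.add_apply, blkIncl_ne_aux nb i j hj, add_zero, sub_self]
    · intro h; exact absurd (Finset.mem_univ i) h
  have hm := mul_le_mul_of_nonneg_left hstep ha.1
  constructor
  · rw [hS, hSv] at hm ⊢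
    nlinarith [hm, hdesc, hgi, hsum]
  · linarith
end
end

section
/- Technical sequence lemma for the adaptive stepsize: let (a_k)_{k≥0} be a sequence of non-negative real numbers satisfying a_k − a_{k+1} ≥ γ a_k² for all k ≥ 0, and assume a_0 ≤ 1/(γ m) for some positive reals γ and m. Then for every k ≥ 0, a_k ≤ (1/γ) · 1/(m + k). -/
/-- **Technical sequence lemma for the adaptive stepsize** (cf. Beck–Tetruashvili 2013,
Lemma 3.5): if `(a_k)` is a sequence of non-negative reals with `a_k − a_{k+1} ≥ γ a_k²`
for all `k`, and `a_0 ≤ 1/(γ m)` for some positive `γ` and `m`, then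
`a_k ≤ (1/γ) · 1/(m + k)` for every `k`. -/
theorem adaptive_stepsize_sequence_lemma
    (a : ℕ → ℝ) (γ M : ℝ) (hγ : 0 < γ) (hM : 0 < M)
    (ha : ∀ k, 0 ≤ a k)
    (hrec : ∀ k : ℕ, γ * (a k) ^ 2 ≤ a k - a (k + 1))
    (h0 : a 0 ≤ 1 / (γ * M)) :
    ∀ k : ℕ, a k ≤ (1 / γ) * (1 / (M + (k : ℝ))) := by
  have key : ∀ k : ℕ, γ * a k * (M + (k : ℝ)) ≤ 1 := by
    intro k
    induction k with
    | zero =>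
      rw [le_div_iff₀ (by positivity)] at h0
      push_cast
      linarith
    | succ k ih =>
      push_cast
      have hk : (0 : ℝ) ≤ (k : ℝ) := Nat.cast_nonneg k
      have hx : 0 ≤ γ * a k := mul_nonneg hγ.le (ha k)
      have hy : 0 ≤ γ * a (k + 1) := mul_nonneg hγ.le (ha (k + 1))
      have hxy : γ * a (k + 1) ≤ γ * a k - (γ * a k) ^ 2 := by
        have := mul_le_mul_of_nonneg_left (hrec k) hγ.le
        nlinarith
      generalize γ * a k = x at *
      generalize γ * a (k + 1) = y at *
      rcases hx.eq_or_lt with h | h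
      · have : y = 0 := by subst h; linarith
        rw [this]; norm_num
      · have h1 : y * (x * (M + k)) ≤ y * 1 := mul_le_mul_of_nonneg_left ih hy
        have h2 : y * (1 + x) ≤ (x - x ^ 2) * (1 + x) :=
          mul_le_mul_of_nonneg_right hxy (by linarith)
        have h3 : 0 < x ^ 3 := by positivity
        refine le_of_mul_le_mul_left ?_ h
        nlinarith
  intro k
  have hk : (0 : ℝ) ≤ (k : ℝ) := Nat.cast_nonneg k
  rw [one_div_mul_one_div, le_div_iff₀ (by positivity)]
  linarith [key k]
end
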